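/- Every 3-degenerate finite simple graph G on n vertices satisfies α_1(G) ≥ n/2; that is, G has an induced forest on at least half of its vertices. -/

import Mathlib

/-- The subgraph of `G` induced on `A` is `d`-degenerate: every nonempty (finite)
subset of `A` contains a vertex with at most `d` neighbours inside that subset. -/
def DegenOn {V : Type*} (G : SimpleGraph V) (d : ℕ) (A : Set V) : Prop :=
  ∀ S : Set V, S ⊆ A → S.Finite → S.Nonempty → ∃ v ∈ S, (S ∩ G.neighborSet v).ncard ≤ d

/-- `G` is `d`-degenerate. -/
def Degen {V : Type*} (G : SimpleGraph V) (d : ℕ) : Prop :=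
  DegenOn G d Set.univ

/-- `α_d(G)`: the maximum number of vertices of an induced `d`-degenerate subgraph of `G`. -/
noncomputable def alphaDeg {V : Type*} [Fintype V] (G : SimpleGraph V) (d : ℕ) : ℕ :=
  sSup {m : ℕ | ∃ A : Set V, DegenOn G d A ∧ A.ncard = m}

theorem degenOn_insert {V : Type*} [Fintype V] (G : SimpleGraph V) (A : Set V) (v : V)
    (hA : DegenOn G 1 A) (hv : (A ∩ G.neighborSet v).ncard ≤ 1) : DegenOn G 1 (insert v A) := by
  intro T hT hf hn
  by_cases hvT : v ∈ T
  · refine ⟨v, hvT, le_trans (Set.ncard_le_ncard ?_ (Set.toFinite _)) hv⟩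
    rintro x ⟨hx, hadj⟩
    refine ⟨?_, hadj⟩
    rcases hT hx with rfl | h
    · exact absurd hadj (by simp)
    · exact h
  · refine hA T ?_ hf hn
    intro x hx
    rcases hT hx with rfl | h
    · exact absurd hx hvT
    · exact h

theorem exists_split {V : Type*} [Fintype V] (G : SimpleGraph V) (hG : Degen G 3) (n : ℕ) :
    ∀ S : Set V, S.ncard = n → ∃ A B : Set V, A ∪ B = S ∧ Disjoint A B ∧
      DegenOn G 1 A ∧ DegenOn G 1 B := by
  induction n with
  | zero =>
    intro S hS
    have hS0 : S = ∅ := (Set.ncard_eq_zero (Set.toFinite S)).1 hS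
    have he : DegenOn G 1 (∅ : Set V) := by
      intro T hT _ hn
      exact absurd (Set.subset_empty_iff.1 hT) hn.ne_empty
    exact ⟨∅, ∅, by simp [hS0], by simp, he, he⟩
  | succ n ih =>
    intro S hS
    have hne : S.Nonempty := by
      rw [← Set.ncard_pos (Set.toFinite S)]; omega
    obtain ⟨v, hvS, hv⟩ := hG S (Set.subset_univ S) (Set.toFinite S) hne
    have hc : (S \ {v}).ncard = n := by
      rw [Set.ncard_sdiff_singleton_of_mem hvS]; omega
    obtain ⟨A, B, hAB, hd, hA, hB⟩ := ih _ hc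
    have hvAB : v ∉ A ∪ B := by rw [hAB]; simp
    have hSe : insert v (A ∪ B) = S := by rw [hAB]; simp [hvS]
    have hsum : (A ∩ G.neighborSet v).ncard + (B ∩ G.neighborSet v).ncard ≤ 3 := by
      rw [← Set.ncard_union_eq (hd.mono Set.inter_subset_left Set.inter_subset_left)
        (Set.toFinite _) (Set.toFinite _), ← Set.union_inter_distrib_right]
      refine le_trans (Set.ncard_le_ncard ?_ (Set.toFinite _)) hv
      rw [hAB]
      exact Set.inter_subset_inter_left _ Set.sdiff_subset
    have h1 : v ∉ A := fun h => hvAB (Or.inl h)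
    have h2 : v ∉ B := fun h => hvAB (Or.inr h)
    by_cases h : (A ∩ G.neighborSet v).ncard ≤ 1
    · refine ⟨insert v A, B, ?_, ?_, degenOn_insert G A v hA h, hB⟩
      · rw [Set.insert_union, hSe]
      · exact Set.disjoint_insert_left.2 ⟨h2, hd⟩
    · refine ⟨A, insert v B, ?_, ?_, hA, degenOn_insert G B v hB (by omega)⟩
      · rw [Set.union_insert, hSe]
      · exact Set.disjoint_insert_right.2 ⟨h1, hd⟩

theorem le_alphaDeg {V : Type*} [Fintype V] (G : SimpleGraph V) (d : ℕ) (A : Set V)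
    (hA : DegenOn G d A) : A.ncard ≤ alphaDeg G d := by
  refine le_csSup ⟨(Set.univ : Set V).ncard, ?_⟩ ⟨A, hA, rfl⟩
  rintro m ⟨B, _, rfl⟩
  exact Set.ncard_le_ncard (Set.subset_univ B) (Set.toFinite _)

theorem stmt_5 {V : Type*} [Fintype V] (G : SimpleGraph V) (hG : Degen G 3) :
    Fintype.card V ≤ 2 * alphaDeg G 1 := by
  obtain ⟨A, B, hAB, -, hA, hB⟩ := exists_split G hG _ Set.univ rfl
  have h := Set.ncard_union_le A B
  rw [hAB, Set.ncard_univ, Nat.card_eq_fintype_card] at h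
  have := le_alphaDeg G 1 A hA
  have := le_alphaDeg G 1 B hB
  omega
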